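/- Piece-wise constant stretched motions (Proposition 4.1): Let σ₀ > 0 and σ₁ > 1. For t ∈ [0,T(ζ)) define σ(t) = σ₀ + σ₁(N₁−τ)t/(N₁−(ζt+τ)); for s ≥ σ(t) define χ(s,t) = N₁σ₀ + (ζt+τ)(s−σ₀) + σ₁(N₁−τ)t and N(s,t) = ζt+τ; and for 0 ≤ s ≤ σ(t) define χ(s,t) = N₁s and N(s,t) = ζt+τ + σ′(t)²(N₁−(ζt+τ)). Then for every T < T(ζ), the pair (χ,N) restricted to [0,∞)×[0,T] is a classical shock solution with shock front σ; moreover σ(0) = σ₀, σ′(0) = σ₁, σ′(t) = σ₁(N₁−τ)²/(N₁−(ζt+τ))² ≥ σ₁ > 1, the stretch is piece-wise constant (χ_s(s,t) = N₁ for s ∈ [0,σ(t)) and χ_s(s,t) = ζt+τ for s ∈ (σ(t),∞)), and (χ,N) is the unique classical shock solution on [0,T(ζ)) with piece-wise constant stretch of this form satisfying σ(0) = σ₀ and σ′(0) = σ₁. -/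

import Mathlib

open Set Filter Topology

noncomputable section

/-- The uncurried version of a function of two real variables `(s, t)`. -/
def uc (χ : ℝ → ℝ → ℝ) : ℝ × ℝ → ℝ := fun p => χ p.1 p.2

/-- Directional partial derivative of `f` within the set `S` at `p` in direction `v`. -/
def pder (f : ℝ × ℝ → ℝ) (S : Set (ℝ × ℝ)) (v : ℝ × ℝ) (p : ℝ × ℝ) : ℝ :=
  fderivWithin ℝ f S p v

/-- The extensible region `{(s,t) : t ∈ [0,T], s ≥ σ(t)}`. -/
def Ereg (σ : ℝ → ℝ) (T : ℝ) : Set (ℝ × ℝ) :=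
  {p : ℝ × ℝ | p.2 ∈ Icc 0 T ∧ σ p.2 ≤ p.1}

/-- The extensible region for all nonnegative times. -/
def EregInf (σ : ℝ → ℝ) : Set (ℝ × ℝ) :=
  {p : ℝ × ℝ | 0 ≤ p.2 ∧ σ p.2 ≤ p.1}

/-- D'Alembert's solution of the wave equation `χ_tt = χ_ss` with data `(χ₀, χ₁)`. -/
def dAlem (χ₀ χ₁ : ℝ → ℝ) (s t : ℝ) : ℝ :=
  (χ₀ (s + t) + χ₀ (s - t)) / 2 + (∫ ξ in (s - t)..(s + t), χ₁ ξ) / 2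

/-- Classical shock front initial data `(χ₀, χ₁, N₀)` with initial shock front `σ₀`,
threshold tension `N₁`, lower tension bound `η` and tension `ζ t + τ` prescribed at
the infinite end.  One-sided values and derivatives at `σ₀` are taken from the right,
i.e. within `Ici σ₀`. -/
structure IsShockData (N₁ η τ ζ σ₀ : ℝ) (χ₀ χ₁ N₀ : ℝ → ℝ) : Prop where
  sigma0_pos : 0 < σ₀
  chi0_cont : ContinuousOn χ₀ (Ici 0)
  chi1_bdd : ∀ K : ℝ, ∃ M, ∀ s ∈ Icc (0 : ℝ) K, |χ₁ s| ≤ M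
  N0_bdd : ∀ K : ℝ, ∃ M, ∀ s ∈ Icc (0 : ℝ) K, |N₀ s| ≤ M
  chi0_smooth : ContDiffOn ℝ 2 χ₀ (Ici σ₀)
  chi1_smooth : ContDiffOn ℝ 1 χ₁ (Ici σ₀)
  N0_smooth : ContDiffOn ℝ 1 N₀ (Ici σ₀)
  N0_eq : ∀ s ∈ Ici σ₀, N₀ s = derivWithin χ₀ (Ici σ₀) s
  N0_gt : ∀ s ∈ Ici σ₀, η < N₀ s
  N0_lt : ∀ s ∈ Ici σ₀, N₀ s < N₁
  chi0_lim : Tendsto (derivWithin χ₀ (Ici σ₀)) atTop (𝓝 τ)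
  chi1_lim : Tendsto (derivWithin χ₁ (Ici σ₀)) atTop (𝓝 ζ)
  front : χ₀ σ₀ = N₁ * σ₀
  speed : 1 < χ₁ σ₀ / (N₁ - derivWithin χ₀ (Ici σ₀) σ₀)
  inext_chi0 : ∀ s ∈ Icc 0 σ₀, χ₀ s = N₁ * s
  inext_chi1 : ∀ s ∈ Ico 0 σ₀, χ₁ s = 0
  inext_N0 : ∀ s ∈ Ico 0 σ₀,
    N₀ s = N₀ σ₀ + (χ₁ σ₀ / (N₁ - derivWithin χ₀ (Ici σ₀) σ₀)) ^ 2 * (N₁ - N₀ σ₀)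

/-- `(χ, N)` together with the shock front `σ` is a classical shock solution on the
time interval `[0,T]` with initial data `(χ₀, χ₁, N₀)` and initial shock front `σ₀`.
Partial derivatives in the extensible region are taken within `Ereg σ T`, and the
shock speed is `derivWithin σ (Icc 0 T)`. -/
structure IsShockSolution (N₁ η τ ζ σ₀ T : ℝ) (χ₀ χ₁ N₀ : ℝ → ℝ)
    (χ N : ℝ → ℝ → ℝ) (σ : ℝ → ℝ) : Prop where
  chi_cont : ContinuousOn (uc χ) (Ici 0 ×ˢ Icc 0 T)
  chit_bdd : ∀ K : ℝ, ∃ M, ∀ p ∈ Ereg σ T, p.1 ≤ K → |pder (uc χ) (Ereg σ T) (0, 1) p| ≤ M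
  N_bdd : ∀ K : ℝ, ∃ M, ∀ s ∈ Icc (0 : ℝ) K, ∀ t ∈ Icc (0 : ℝ) T, |N s t| ≤ M
  sigma_smooth : ContDiffOn ℝ 2 σ (Icc 0 T)
  sigma_ge : ∀ t ∈ Icc 0 T, σ₀ ≤ σ t
  sigma_init : σ 0 = σ₀
  chi_smooth : ContDiffOn ℝ 2 (uc χ) (Ereg σ T)
  N_smooth : ContDiffOn ℝ 1 (uc N) (Ereg σ T)
  N_eq : ∀ p ∈ Ereg σ T, N p.1 p.2 = pder (uc χ) (Ereg σ T) (1, 0) p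
  N_gt : ∀ p ∈ Ereg σ T, η < N p.1 p.2
  N_lt : ∀ p ∈ Ereg σ T, N p.1 p.2 < N₁
  front : ∀ t ∈ Icc 0 T, χ (σ t) t = N₁ * σ t
  sigma_der : ∀ t ∈ Icc 0 T,
    derivWithin σ (Icc 0 T) t = pder (uc χ) (Ereg σ T) (0, 1) (σ t, t) / (N₁ - N (σ t) t)
  sigma_der_gt : ∀ t ∈ Icc 0 T, 1 < derivWithin σ (Icc 0 T) t
  inext_chi : ∀ t ∈ Icc 0 T, ∀ s ∈ Icc 0 (σ t), χ s t = N₁ * s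
  inext_N : ∀ t ∈ Icc 0 T, ∀ s ∈ Ico 0 (σ t),
    N s t = N (σ t) t + (derivWithin σ (Icc 0 T) t) ^ 2 * (N₁ - N (σ t) t)
  inext_N_gt : ∀ t ∈ Icc 0 T, ∀ s ∈ Ico 0 (σ t), N₁ < N s t
  wave : ∀ p ∈ Ereg σ T,
    pder (pder (uc χ) (Ereg σ T) (0, 1)) (Ereg σ T) (0, 1) p
      = pder (pder (uc χ) (Ereg σ T) (1, 0)) (Ereg σ T) (1, 0) p
  bc_infty : ∀ t ∈ Icc 0 T,
    Tendsto (fun s => pder (uc χ) (Ereg σ T) (1, 0) (s, t)) atTop (𝓝 (ζ * t + τ))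
  init_chi : ∀ s ∈ Ici σ₀, χ s 0 = χ₀ s
  init_chit : ∀ s ∈ Ici σ₀, pder (uc χ) (Ereg σ T) (0, 1) (s, 0) = χ₁ s

/-!
Where `χ_s = ζ t + τ`, the motion is affine in `s`, and the front condition `χ(σ(t), t) = N₁ σ(t)`
forces `χ(s, t) = v(t) + (ζ t + τ) s` with `v(t) = (N₁ - (ζ t + τ)) σ(t)`.
Such a function solves the wave equation exactly when `v'' = 0`, that is, when
`(N₁ - (ζ t + τ)) σ(t) = (N₁ - τ) σ₀ + (σ₁ (N₁ - τ) - ζ σ₀) t`, since `σ(0) = σ₀` and `σ'(0) = σ₁`.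
Solving for `σ` gives the explicit front, and all other requirements are computations.
-/

theorem eq_add_mul_sub_of_deriv_eq {f : ℝ → ℝ} {a b k : ℝ} (hab : a ≤ b)
    (hf : ContinuousOn f (Icc a b)) (hf' : DifferentiableOn ℝ f (Ioo a b))
    (hk : ∀ x ∈ Ioo a b, deriv f x = k) : f b = f a + k * (b - a) := by
  rcases hab.eq_or_lt with rfl | hlt
  · simp
  · obtain ⟨c, hc, hslope⟩ := exists_deriv_eq_slope f hlt hf hf'
    rw [hk c hc, eq_div_iff (sub_pos.mpr hlt).ne'] at hslope
    linarith

theorem eq_add_mul_sub_of_derivWithin_derivWithin_eq_zero {w : ℝ → ℝ} {a b x : ℝ}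
    (hw : ContDiffOn ℝ 2 w (Icc a b))
    (hw'' : ∀ y ∈ Icc a b, derivWithin (derivWithin w (Icc a b)) (Icc a b) y = 0)
    (hx : x ∈ Icc a b) : w x = w a + derivWithin w (Icc a b) a * (x - a) := by
  rcases hx.1.eq_or_lt with rfl | hax
  · simp
  have hI : UniqueDiffOn ℝ (Icc a b) := uniqueDiffOn_Icc (hax.trans_le hx.2)
  have hw' : DifferentiableOn ℝ (derivWithin w (Icc a b)) (Icc a b) :=
    (hw.derivWithin (m := 1) hI (by norm_num)).differentiableOn (by norm_num)
  have hconst := constant_of_derivWithin_zero hw' fun y hy => hw'' y ⟨hy.1, hy.2.le⟩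
  have hsub : Icc a x ⊆ Icc a b := Icc_subset_Icc_right hx.2
  refine eq_add_mul_sub_of_deriv_eq hx.1 (hw.continuousOn.mono hsub)
    ((hw.differentiableOn (by norm_num)).mono (Ioo_subset_Icc_self.trans hsub)) fun y hy => ?_
  have hyI : Icc a b ∈ 𝓝 y := Icc_mem_nhds hy.1 (hy.2.trans_le hx.2)
  rw [← derivWithin_of_mem_nhds hyI, hconst y (mem_of_mem_nhds hyI)]

theorem uniqueDiffOn_Ereg {σ : ℝ → ℝ} {T : ℝ} (hT : 0 < T)
    (hσ : DifferentiableOn ℝ σ (Icc 0 T)) : UniqueDiffOn ℝ (Ereg σ T) := by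
  have himage : Ereg σ T = (fun q : ℝ × ℝ => (q.1 + σ q.2, q.2)) '' (Ici 0 ×ˢ Icc 0 T) := by
    ext ⟨s, t⟩
    constructor
    · rintro ⟨ht, hs⟩
      exact ⟨(s - σ t, t), ⟨sub_nonneg.mpr hs, ht⟩, by simp⟩
    · rintro ⟨⟨r, t⟩, ⟨hr, ht⟩, ⟨⟩⟩
      exact ⟨ht, le_add_of_nonneg_left hr⟩
  rw [himage]
  refine ((uniqueDiffOn_Ici 0).prod (uniqueDiffOn_Icc hT)).image (f' := fun q =>
    (ContinuousLinearMap.fst ℝ ℝ ℝ +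
      derivWithin σ (Icc 0 T) q.2 • ContinuousLinearMap.snd ℝ ℝ ℝ).prod
      (ContinuousLinearMap.snd ℝ ℝ ℝ)) (fun q hq => ?_) fun q _ => ?_
  · have hσq : HasFDerivWithinAt (fun q : ℝ × ℝ => σ q.2)
        (derivWithin σ (Icc 0 T) q.2 • ContinuousLinearMap.snd ℝ ℝ ℝ) (Ici 0 ×ˢ Icc 0 T) q :=
      (hσ q.2 hq.2).hasDerivWithinAt.comp_hasFDerivWithinAt q hasFDerivWithinAt_snd
        fun _ hx => hx.2
    exact (hasFDerivWithinAt_fst.add hσq).prodMk hasFDerivWithinAt_snd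
  · refine Function.Surjective.denseRange fun ⟨a, b⟩ =>
      ⟨(a - derivWithin σ (Icc 0 T) q.2 * b, b), ?_⟩
    simp

section AffineInSpace

variable {S : Set (ℝ × ℝ)} {I : Set ℝ} {f : ℝ × ℝ → ℝ} {v v' v'' k k' k'' : ℝ → ℝ} {p : ℝ × ℝ}

theorem hasFDerivWithinAt_of_eqOn_add_mul (hSI : MapsTo Prod.snd S I)
    (hf : EqOn f (fun q => v q.2 + k q.2 * q.1) S)
    (hv : ∀ t ∈ I, HasDerivWithinAt v (v' t) I t) (hk : ∀ t ∈ I, HasDerivWithinAt k (k' t) I t)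
    (hp : p ∈ S) :
    HasFDerivWithinAt f (k p.2 • ContinuousLinearMap.fst ℝ ℝ ℝ +
      (v' p.2 + k' p.2 * p.1) • ContinuousLinearMap.snd ℝ ℝ ℝ) S p := by
  have hsnd : HasFDerivWithinAt Prod.snd (ContinuousLinearMap.snd ℝ ℝ ℝ) S p :=
    hasFDerivWithinAt_snd
  have hv_snd := (hv _ (hSI hp)).comp_hasFDerivWithinAt p hsnd hSI
  have hk_snd := (hk _ (hSI hp)).comp_hasFDerivWithinAt p hsnd hSI
  refine ((hv_snd.add (hk_snd.mul hasFDerivWithinAt_fst)).congr hf (hf hp)).congr_fderiv ?_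
  ext <;> simp [mul_comm]

theorem pder_fst_of_eqOn_add_mul (hS : UniqueDiffOn ℝ S) (hSI : MapsTo Prod.snd S I)
    (hf : EqOn f (fun q => v q.2 + k q.2 * q.1) S)
    (hv : ∀ t ∈ I, HasDerivWithinAt v (v' t) I t) (hk : ∀ t ∈ I, HasDerivWithinAt k (k' t) I t)
    (hp : p ∈ S) : pder f S (1, 0) p = k p.2 := by
  simp [pder, (hasFDerivWithinAt_of_eqOn_add_mul hSI hf hv hk hp).fderivWithin (hS p hp)]

theorem pder_snd_of_eqOn_add_mul (hS : UniqueDiffOn ℝ S) (hSI : MapsTo Prod.snd S I)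
    (hf : EqOn f (fun q => v q.2 + k q.2 * q.1) S)
    (hv : ∀ t ∈ I, HasDerivWithinAt v (v' t) I t) (hk : ∀ t ∈ I, HasDerivWithinAt k (k' t) I t)
    (hp : p ∈ S) : pder f S (0, 1) p = v' p.2 + k' p.2 * p.1 := by
  simp [pder, (hasFDerivWithinAt_of_eqOn_add_mul hSI hf hv hk hp).fderivWithin (hS p hp)]

theorem pder_fst_fst_of_eqOn_add_mul (hS : UniqueDiffOn ℝ S) (hSI : MapsTo Prod.snd S I)
    (hf : EqOn f (fun q => v q.2 + k q.2 * q.1) S)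
    (hv : ∀ t ∈ I, HasDerivWithinAt v (v' t) I t) (hk : ∀ t ∈ I, HasDerivWithinAt k (k' t) I t)
    (hp : p ∈ S) : pder (pder f S (1, 0)) S (1, 0) p = 0 := by
  have hfst : EqOn (pder f S (1, 0)) (fun q => k q.2 + 0 * q.1) S := fun q hq => by
    simp [pder_fst_of_eqOn_add_mul hS hSI hf hv hk hq]
  exact pder_fst_of_eqOn_add_mul (k := 0) (k' := 0) hS hSI hfst hk
    (fun t _ => hasDerivWithinAt_const t I 0) hp

theorem pder_snd_snd_of_eqOn_add_mul (hS : UniqueDiffOn ℝ S) (hSI : MapsTo Prod.snd S I)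
    (hf : EqOn f (fun q => v q.2 + k q.2 * q.1) S)
    (hv : ∀ t ∈ I, HasDerivWithinAt v (v' t) I t) (hk : ∀ t ∈ I, HasDerivWithinAt k (k' t) I t)
    (hv' : ∀ t ∈ I, HasDerivWithinAt v' (v'' t) I t)
    (hk' : ∀ t ∈ I, HasDerivWithinAt k' (k'' t) I t) (hp : p ∈ S) :
    pder (pder f S (0, 1)) S (0, 1) p = v'' p.2 + k'' p.2 * p.1 :=
  pder_snd_of_eqOn_add_mul hS hSI
    (fun _ hq => pder_snd_of_eqOn_add_mul hS hSI hf hv hk hq) hv' hk' hp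

end AffineInSpace

theorem hasDerivAt_mul_add_const (a b t : ℝ) : HasDerivAt (fun t => a * t + b) a t := by
  simpa using ((hasDerivAt_id t).const_mul a).add_const b

theorem mapsTo_snd_Ereg (σ : ℝ → ℝ) (T : ℝ) : MapsTo Prod.snd (Ereg σ T) (Icc 0 T) :=
  fun _ hp => hp.1

/-- The explicit shock front `σ(t)` of the piece-wise constant stretched motion, with initial
position `σ₀` and initial speed `σ₁`. It is meaningful only as long as `ζ t + τ < N₁`. -/
def shockFront (N₁ τ ζ σ₀ σ₁ t : ℝ) : ℝ :=
  σ₀ + σ₁ * (N₁ - τ) * t / (N₁ - (ζ * t + τ))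

/-- The speed `σ'(t)` of the explicit shock front, which does not depend on `σ₀`. -/
def shockSpeed (N₁ τ ζ σ₁ t : ℝ) : ℝ :=
  σ₁ * (N₁ - τ) ^ 2 / (N₁ - (ζ * t + τ)) ^ 2

/-- The motion `χ(s, t)` that is inextensible with stretch `N₁` behind the explicit shock front and
has stretch `ζ t + τ` ahead of it. -/
def shockMotion (N₁ τ ζ σ₀ σ₁ s t : ℝ) : ℝ :=
  if s ≤ shockFront N₁ τ ζ σ₀ σ₁ t then N₁ * s
  else N₁ * σ₀ + (ζ * t + τ) * (s - σ₀) + σ₁ * (N₁ - τ) * t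

/-- The tension `N(s, t)` of the piece-wise constant stretched motion. On the front itself it takes
the value from the extensible side. -/
def shockTension (N₁ τ ζ σ₀ σ₁ s t : ℝ) : ℝ :=
  if s < shockFront N₁ τ ζ σ₀ σ₁ t then
    (ζ * t + τ) + shockSpeed N₁ τ ζ σ₁ t ^ 2 * (N₁ - (ζ * t + τ))
  else ζ * t + τ

/-- The initial velocity `χ₁(s)` of the piece-wise constant stretched motion, taken from the
extensible side at the front. -/
def shockInitialVelocity (N₁ τ ζ σ₀ σ₁ s : ℝ) : ℝ :=
  if s < σ₀ then 0 else ζ * (s - σ₀) + σ₁ * (N₁ - τ)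

section ExplicitSolution

variable {N₁ η τ ζ σ₀ σ₁ s t T : ℝ}

theorem shockFront_zero : shockFront N₁ τ ζ σ₀ σ₁ 0 = σ₀ := by
  simp [shockFront]

theorem shockSpeed_zero (hτN : τ < N₁) : shockSpeed N₁ τ ζ σ₁ 0 = σ₁ := by
  simp [shockSpeed, (sub_pos.mpr hτN).ne']

theorem hasDerivAt_shockFront (ht : ζ * t + τ < N₁) :
    HasDerivAt (shockFront N₁ τ ζ σ₀ σ₁) (shockSpeed N₁ τ ζ σ₁ t) t := by
  have hgap : N₁ - (ζ * t + τ) ≠ 0 := (sub_pos.mpr ht).ne'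
  have hnum : HasDerivAt (fun t => σ₁ * (N₁ - τ) * t) (σ₁ * (N₁ - τ)) t :=
    hasDerivAt_const_mul _
  have hden : HasDerivAt (fun t => N₁ - (ζ * t + τ)) (-ζ) t :=
    (hasDerivAt_mul_add_const ζ τ t).const_sub N₁
  refine ((hnum.div hden hgap).const_add σ₀).congr_deriv ?_
  unfold shockSpeed
  field_simp
  ring

theorem le_shockSpeed (hζ : 0 ≤ ζ) (hσ₁ : 0 ≤ σ₁) (ht₀ : 0 ≤ t) (ht : ζ * t + τ < N₁) :
    σ₁ ≤ shockSpeed N₁ τ ζ σ₁ t := by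
  have hgap : 0 < N₁ - (ζ * t + τ) := sub_pos.mpr ht
  have hgap_le : N₁ - (ζ * t + τ) ≤ N₁ - τ := by linarith [mul_nonneg hζ ht₀]
  rw [shockSpeed, le_div_iff₀ (pow_pos hgap 2)]
  gcongr

theorem le_shockFront (hτN : τ ≤ N₁) (hσ₁ : 0 ≤ σ₁) (ht₀ : 0 ≤ t) (ht : ζ * t + τ ≤ N₁) :
    σ₀ ≤ shockFront N₁ τ ζ σ₀ σ₁ t :=
  le_add_of_nonneg_right <|
    div_nonneg (mul_nonneg (mul_nonneg hσ₁ (sub_nonneg.mpr hτN)) ht₀) (sub_nonneg.mpr ht)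

theorem gap_mul_shockFront (ht : ζ * t + τ < N₁) :
    (N₁ - (ζ * t + τ)) * shockFront N₁ τ ζ σ₀ σ₁ t =
      (N₁ - τ) * σ₀ + (σ₁ * (N₁ - τ) - ζ * σ₀) * t := by
  have hgap : N₁ - (ζ * t + τ) ≠ 0 := (sub_pos.mpr ht).ne'
  rw [shockFront, mul_add, mul_div_cancel₀ _ hgap]
  ring

theorem shockSpeed_eq_div (ht : ζ * t + τ < N₁) :
    shockSpeed N₁ τ ζ σ₁ t =
      (σ₁ * (N₁ - τ) - ζ * σ₀ + ζ * shockFront N₁ τ ζ σ₀ σ₁ t) / (N₁ - (ζ * t + τ)) := by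
  have hgap : N₁ - (ζ * t + τ) ≠ 0 := (sub_pos.mpr ht).ne'
  rw [shockSpeed, shockFront]
  field_simp
  ring

theorem contDiffOn_shockFront (hN : ∀ t ∈ Icc 0 T, ζ * t + τ < N₁) :
    ContDiffOn ℝ 2 (shockFront N₁ τ ζ σ₀ σ₁) (Icc 0 T) :=
  contDiffOn_const.add <| ContDiffOn.div (by fun_prop) (by fun_prop)
    fun t ht => (sub_pos.mpr (hN t ht)).ne'

theorem continuousOn_shockSpeed (hN : ∀ t ∈ Icc 0 T, ζ * t + τ < N₁) :
    ContinuousOn (shockSpeed N₁ τ ζ σ₁) (Icc 0 T) :=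
  ContinuousOn.div (by fun_prop) (by fun_prop)
    fun t ht => pow_ne_zero _ (sub_pos.mpr (hN t ht)).ne'

theorem derivWithin_shockFront (hT : 0 < T) (hN : ∀ t ∈ Icc 0 T, ζ * t + τ < N₁)
    (ht : t ∈ Icc 0 T) :
    derivWithin (shockFront N₁ τ ζ σ₀ σ₁) (Icc 0 T) t = shockSpeed N₁ τ ζ σ₁ t :=
  (hasDerivAt_shockFront (hN t ht)).hasDerivWithinAt.derivWithin (uniqueDiffOn_Icc hT t ht)

theorem shockMotion_eq_sub_mul_max (ht : ζ * t + τ < N₁) :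
    shockMotion N₁ τ ζ σ₀ σ₁ s t =
      N₁ * s - (N₁ - (ζ * t + τ)) * max 0 (s - shockFront N₁ τ ζ σ₀ σ₁ t) := by
  rw [shockMotion]
  split_ifs with hs
  · rw [max_eq_left (sub_nonpos.mpr hs)]
    ring
  · rw [max_eq_right (sub_nonneg.mpr (not_le.mp hs).le)]
    linear_combination -gap_mul_shockFront (σ₀ := σ₀) (σ₁ := σ₁) ht

theorem shockMotion_of_le (hs : s ≤ shockFront N₁ τ ζ σ₀ σ₁ t) :
    shockMotion N₁ τ ζ σ₀ σ₁ s t = N₁ * s :=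
  if_pos hs

theorem shockMotion_of_ge (ht : ζ * t + τ < N₁) (hs : shockFront N₁ τ ζ σ₀ σ₁ t ≤ s) :
    shockMotion N₁ τ ζ σ₀ σ₁ s t =
      (σ₁ * (N₁ - τ) - ζ * σ₀) * t + (N₁ - τ) * σ₀ + (ζ * t + τ) * s := by
  rw [shockMotion_eq_sub_mul_max ht, max_eq_right (sub_nonneg.mpr hs)]
  linear_combination gap_mul_shockFront (σ₀ := σ₀) (σ₁ := σ₁) ht

theorem shockTension_of_lt (hs : s < shockFront N₁ τ ζ σ₀ σ₁ t) :
    shockTension N₁ τ ζ σ₀ σ₁ s t =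
      (ζ * t + τ) + shockSpeed N₁ τ ζ σ₁ t ^ 2 * (N₁ - (ζ * t + τ)) :=
  if_pos hs

theorem shockTension_of_ge (hs : shockFront N₁ τ ζ σ₀ σ₁ t ≤ s) :
    shockTension N₁ τ ζ σ₀ σ₁ s t = ζ * t + τ :=
  if_neg hs.not_gt

theorem deriv_shockMotion_of_lt (hs : s < shockFront N₁ τ ζ σ₀ σ₁ t) :
    deriv (fun x => shockMotion N₁ τ ζ σ₀ σ₁ x t) s = N₁ := by
  refine ((hasDerivAt_const_mul N₁).congr_of_eventuallyEq ?_).deriv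
  filter_upwards [Iio_mem_nhds hs] with x hx using shockMotion_of_le (le_of_lt hx)

theorem deriv_shockMotion_of_gt (hs : shockFront N₁ τ ζ σ₀ σ₁ t < s) :
    deriv (fun x => shockMotion N₁ τ ζ σ₀ σ₁ x t) s = ζ * t + τ := by
  have haffine := hasDerivAt_mul_add_const (ζ * t + τ)
    (N₁ * σ₀ - (ζ * t + τ) * σ₀ + σ₁ * (N₁ - τ) * t) s
  refine (haffine.congr_of_eventuallyEq ?_).deriv
  filter_upwards [Ioi_mem_nhds hs] with x hx
  rw [shockMotion, if_neg (not_le.mpr hx)]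
  ring

theorem continuousOn_shockMotion (hN : ∀ t ∈ Icc 0 T, ζ * t + τ < N₁) :
    ContinuousOn (uc (shockMotion N₁ τ ζ σ₀ σ₁)) (univ ×ˢ Icc 0 T) := by
  have hfront : ContinuousOn (fun p : ℝ × ℝ => shockFront N₁ τ ζ σ₀ σ₁ p.2) (univ ×ˢ Icc 0 T) :=
    (contDiffOn_shockFront hN).continuousOn.comp continuousOn_snd fun _ hp => hp.2
  have hmax : ContinuousOn (fun p : ℝ × ℝ => N₁ * p.1 - (N₁ - (ζ * p.2 + τ)) *
      max 0 (p.1 - shockFront N₁ τ ζ σ₀ σ₁ p.2)) (univ ×ˢ Icc 0 T) :=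
    ContinuousOn.sub (by fun_prop) <| ContinuousOn.mul (by fun_prop) <|
      continuousOn_const.sup (continuousOn_fst.sub hfront)
  exact hmax.congr fun p hp => shockMotion_eq_sub_mul_max (hN p.2 hp.2)

theorem exists_abs_shockTension_le (hN : ∀ t ∈ Icc 0 T, ζ * t + τ < N₁) :
    ∃ M, ∀ s, ∀ t ∈ Icc 0 T, |shockTension N₁ τ ζ σ₀ σ₁ s t| ≤ M := by
  have hspeed := continuousOn_shockSpeed (σ₁ := σ₁) hN
  have hbehind : ContinuousOn (fun t => (ζ * t + τ) +
      shockSpeed N₁ τ ζ σ₁ t ^ 2 * (N₁ - (ζ * t + τ))) (Icc 0 T) := by fun_prop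
  have hahead : ContinuousOn (fun t => ζ * t + τ) (Icc 0 T) := by fun_prop
  obtain ⟨M₁, hM₁⟩ := isCompact_Icc.exists_bound_of_continuousOn hbehind
  obtain ⟨M₂, hM₂⟩ := isCompact_Icc.exists_bound_of_continuousOn hahead
  refine ⟨max M₁ M₂, fun s t ht => ?_⟩
  rw [shockTension]
  split_ifs
  · exact (hM₁ t ht).trans (le_max_left _ _)
  · exact (hM₂ t ht).trans (le_max_right _ _)

theorem lt_shockTension (ht : ζ * t + τ < N₁) (hspeed : 1 < shockSpeed N₁ τ ζ σ₁ t)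
    (hs : s < shockFront N₁ τ ζ σ₀ σ₁ t) : N₁ < shockTension N₁ τ ζ σ₀ σ₁ s t := by
  have hgap : 0 < N₁ - (ζ * t + τ) := sub_pos.mpr ht
  rw [shockTension_of_lt hs]
  linarith [lt_mul_of_one_lt_left hgap (one_lt_pow₀ hspeed two_ne_zero)]

theorem eqOn_uc_shockMotion (hN : ∀ t ∈ Icc 0 T, ζ * t + τ < N₁) :
    EqOn (uc (shockMotion N₁ τ ζ σ₀ σ₁))
      (fun q => (σ₁ * (N₁ - τ) - ζ * σ₀) * q.2 + (N₁ - τ) * σ₀ + (ζ * q.2 + τ) * q.1)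
      (Ereg (shockFront N₁ τ ζ σ₀ σ₁) T) :=
  fun q hq => shockMotion_of_ge (hN q.2 hq.1) hq.2

theorem uniqueDiffOn_Ereg_shockFront (hT : 0 < T) (hN : ∀ t ∈ Icc 0 T, ζ * t + τ < N₁) :
    UniqueDiffOn ℝ (Ereg (shockFront N₁ τ ζ σ₀ σ₁) T) :=
  uniqueDiffOn_Ereg hT ((contDiffOn_shockFront hN).differentiableOn two_ne_zero)

variable {p : ℝ × ℝ}

theorem pder_fst_shockMotion (hT : 0 < T) (hN : ∀ t ∈ Icc 0 T, ζ * t + τ < N₁)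
    (hp : p ∈ Ereg (shockFront N₁ τ ζ σ₀ σ₁) T) :
    pder (uc (shockMotion N₁ τ ζ σ₀ σ₁)) (Ereg (shockFront N₁ τ ζ σ₀ σ₁) T) (1, 0) p =
      ζ * p.2 + τ :=
  pder_fst_of_eqOn_add_mul (uniqueDiffOn_Ereg_shockFront hT hN) (mapsTo_snd_Ereg _ T)
    (eqOn_uc_shockMotion hN) (fun t _ => (hasDerivAt_mul_add_const _ _ t).hasDerivWithinAt)
    (fun t _ => (hasDerivAt_mul_add_const ζ τ t).hasDerivWithinAt) hp

theorem pder_snd_shockMotion (hT : 0 < T) (hN : ∀ t ∈ Icc 0 T, ζ * t + τ < N₁)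
    (hp : p ∈ Ereg (shockFront N₁ τ ζ σ₀ σ₁) T) :
    pder (uc (shockMotion N₁ τ ζ σ₀ σ₁)) (Ereg (shockFront N₁ τ ζ σ₀ σ₁) T) (0, 1) p =
      σ₁ * (N₁ - τ) - ζ * σ₀ + ζ * p.1 :=
  pder_snd_of_eqOn_add_mul (uniqueDiffOn_Ereg_shockFront hT hN) (mapsTo_snd_Ereg _ T)
    (eqOn_uc_shockMotion hN) (fun t _ => (hasDerivAt_mul_add_const _ _ t).hasDerivWithinAt)
    (fun t _ => (hasDerivAt_mul_add_const ζ τ t).hasDerivWithinAt) hp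

theorem exists_abs_pder_snd_shockMotion_le (hT : 0 < T) (hN : ∀ t ∈ Icc 0 T, ζ * t + τ < N₁)
    (hσ₁ : 0 ≤ σ₁) (K : ℝ) :
    ∃ M, ∀ p ∈ Ereg (shockFront N₁ τ ζ σ₀ σ₁) T, p.1 ≤ K →
      |pder (uc (shockMotion N₁ τ ζ σ₀ σ₁)) (Ereg (shockFront N₁ τ ζ σ₀ σ₁) T) (0, 1) p| ≤ M := by
  have hτN : τ < N₁ := by simpa using hN 0 (left_mem_Icc.mpr hT.le)
  obtain ⟨M, hM⟩ := (isCompact_Icc (a := σ₀) (b := K)).exists_bound_of_continuousOn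
    (f := fun s => σ₁ * (N₁ - τ) - ζ * σ₀ + ζ * s) (by fun_prop)
  refine ⟨M, fun p hp hpK => ?_⟩
  have hfront := le_shockFront (σ₀ := σ₀) hτN.le hσ₁ hp.1.1 (hN p.2 hp.1).le
  rw [pder_snd_shockMotion hT hN hp]
  exact hM p.1 ⟨hfront.trans hp.2, hpK⟩

theorem shockMotion_wave (hT : 0 < T) (hN : ∀ t ∈ Icc 0 T, ζ * t + τ < N₁)
    (hp : p ∈ Ereg (shockFront N₁ τ ζ σ₀ σ₁) T) :
    pder (pder (uc (shockMotion N₁ τ ζ σ₀ σ₁)) (Ereg (shockFront N₁ τ ζ σ₀ σ₁) T) (0, 1))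
        (Ereg (shockFront N₁ τ ζ σ₀ σ₁) T) (0, 1) p =
      pder (pder (uc (shockMotion N₁ τ ζ σ₀ σ₁)) (Ereg (shockFront N₁ τ ζ σ₀ σ₁) T) (1, 0))
        (Ereg (shockFront N₁ τ ζ σ₀ σ₁) T) (1, 0) p := by
  have hu := uniqueDiffOn_Ereg_shockFront (σ₀ := σ₀) (σ₁ := σ₁) hT hN
  have hv : ∀ t ∈ Icc 0 T, HasDerivWithinAt
      (fun t => (σ₁ * (N₁ - τ) - ζ * σ₀) * t + (N₁ - τ) * σ₀) (σ₁ * (N₁ - τ) - ζ * σ₀)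
      (Icc 0 T) t := fun t _ => (hasDerivAt_mul_add_const _ _ t).hasDerivWithinAt
  have hk : ∀ t ∈ Icc 0 T, HasDerivWithinAt (fun t => ζ * t + τ) ζ (Icc 0 T) t :=
    fun t _ => (hasDerivAt_mul_add_const ζ τ t).hasDerivWithinAt
  rw [pder_fst_fst_of_eqOn_add_mul hu (mapsTo_snd_Ereg _ T) (eqOn_uc_shockMotion hN) hv hk hp,
    pder_snd_snd_of_eqOn_add_mul (v'' := 0) (k'' := 0) hu (mapsTo_snd_Ereg _ T)
      (eqOn_uc_shockMotion hN) hv hk (fun t _ => hasDerivWithinAt_const t _ _)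
      (fun t _ => hasDerivWithinAt_const t _ _) hp]
  simp

theorem isShockSolution_shockMotion (hT : 0 < T) (hη : ∀ t ∈ Icc 0 T, η < ζ * t + τ)
    (hN : ∀ t ∈ Icc 0 T, ζ * t + τ < N₁)
    (hspeed : ∀ t ∈ Icc 0 T, 1 < shockSpeed N₁ τ ζ σ₁ t) :
    IsShockSolution N₁ η τ ζ σ₀ T (fun s => shockMotion N₁ τ ζ σ₀ σ₁ s 0)
      (shockInitialVelocity N₁ τ ζ σ₀ σ₁) (fun s => shockTension N₁ τ ζ σ₀ σ₁ s 0)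
      (shockMotion N₁ τ ζ σ₀ σ₁) (shockTension N₁ τ ζ σ₀ σ₁) (shockFront N₁ τ ζ σ₀ σ₁) := by
  have hσ' := fun t ht => derivWithin_shockFront (σ₀ := σ₀) (σ₁ := σ₁) (t := t) hT hN ht
  have hχs := fun p hp => pder_fst_shockMotion (σ₀ := σ₀) (σ₁ := σ₁) (p := p) hT hN hp
  have hχt := fun p hp => pder_snd_shockMotion (σ₀ := σ₀) (σ₁ := σ₁) (p := p) hT hN hp
  have hNE : ∀ p ∈ Ereg (shockFront N₁ τ ζ σ₀ σ₁) T,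
      shockTension N₁ τ ζ σ₀ σ₁ p.1 p.2 = ζ * p.2 + τ := fun p hp => shockTension_of_ge hp.2
  have h0 : (0 : ℝ) ∈ Icc 0 T := left_mem_Icc.mpr hT.le
  have hτN : τ < N₁ := by simpa using hN 0 h0
  have hσ₁ : 1 < σ₁ := shockSpeed_zero (σ₁ := σ₁) hτN ▸ hspeed 0 h0
  exact
  { chi_cont := (continuousOn_shockMotion hN).mono (prod_mono_left (subset_univ _))
    chit_bdd := exists_abs_pder_snd_shockMotion_le hT hN (by linarith)
    N_bdd := fun K => (exists_abs_shockTension_le hN).imp fun M hM s _ => hM s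
    sigma_smooth := contDiffOn_shockFront hN
    sigma_ge := fun t ht => le_shockFront hτN.le (by linarith) ht.1 (hN t ht).le
    sigma_init := shockFront_zero
    chi_smooth := ContDiffOn.congr (by fun_prop) (eqOn_uc_shockMotion hN)
    N_smooth := ContDiffOn.congr (f := fun p : ℝ × ℝ => ζ * p.2 + τ) (by fun_prop)
      fun p hp => hNE p hp
    N_eq := fun p hp => (hNE p hp).trans (hχs p hp).symm
    N_gt := fun p hp => (hη p.2 hp.1).trans_eq (hNE p hp).symm
    N_lt := fun p hp => (hNE p hp).trans_lt (hN p.2 hp.1)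
    front := fun t _ => shockMotion_of_le le_rfl
    sigma_der := fun t ht => by
      rw [hσ' t ht, hχt _ ⟨ht, le_rfl⟩, shockTension_of_ge le_rfl, shockSpeed_eq_div (hN t ht)]
    sigma_der_gt := fun t ht => (hspeed t ht).trans_eq (hσ' t ht).symm
    inext_chi := fun t _ s hs => shockMotion_of_le hs.2
    inext_N := fun t ht s hs => by
      rw [hσ' t ht, shockTension_of_ge le_rfl, shockTension_of_lt hs.2]
    inext_N_gt := fun t ht s hs => lt_shockTension (hN t ht) (hspeed t ht) hs.2
    wave := fun p hp => shockMotion_wave hT hN hp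
    bc_infty := fun t ht => tendsto_const_nhds.congr' <| by
      filter_upwards [eventually_ge_atTop (shockFront N₁ τ ζ σ₀ σ₁ t)] with s hs
      exact (hχs (s, t) ⟨ht, hs⟩).symm
    init_chi := fun _ _ => rfl
    init_chit := fun s hs => by
      rw [hχt (s, 0) ⟨h0, shockFront_zero.trans_le hs⟩, shockInitialVelocity, if_neg hs.not_gt]
      ring }

end ExplicitSolution

namespace IsShockSolution

variable {N₁ η τ ζ σ₀ σ₁ T s t : ℝ} {χ₀ χ₁ N₀ σ : ℝ → ℝ} {χ N : ℝ → ℝ → ℝ}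

theorem motion_eq_front_add (hS : IsShockSolution N₁ η τ ζ σ₀ T χ₀ χ₁ N₀ χ N σ) {k : ℝ}
    (ht : t ∈ Icc 0 T) (hk : ∀ x, σ t < x → deriv (fun x => χ x t) x = k) (hs : σ t ≤ s) :
    χ s t = N₁ * σ t + k * (s - σ t) := by
  have hdiff : DifferentiableOn ℝ (fun x => χ x t) (Ici (σ t)) :=
    (hS.chi_smooth.differentiableOn two_ne_zero).comp (f := fun x => (x, t)) (by fun_prop)
      fun x hx => ⟨ht, hx⟩
  have hdiff' : DifferentiableOn ℝ (fun x => χ x t) (Ioo (σ t) s) :=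
    hdiff.mono fun x hx => hx.1.le
  rw [← hS.front t ht]
  exact eq_add_mul_sub_of_deriv_eq hs (hdiff.continuousOn.mono Icc_subset_Ici_self) hdiff'
    fun x hx => hk x hx.1

theorem uniqueDiffOn_Ereg (hS : IsShockSolution N₁ η τ ζ σ₀ T χ₀ χ₁ N₀ χ N σ) (hT : 0 < T) :
    UniqueDiffOn ℝ (Ereg σ T) :=
  _root_.uniqueDiffOn_Ereg hT (hS.sigma_smooth.differentiableOn two_ne_zero)

theorem eqOn_uc (hS : IsShockSolution N₁ η τ ζ σ₀ T χ₀ χ₁ N₀ χ N σ)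
    (hstretch : ∀ t ∈ Icc 0 T, ∀ s, σ t < s → deriv (fun x => χ x t) s = ζ * t + τ) :
    EqOn (uc χ) (fun q => (N₁ - (ζ * q.2 + τ)) * σ q.2 + (ζ * q.2 + τ) * q.1) (Ereg σ T) := by
  intro q hq
  rw [uc, hS.motion_eq_front_add hq.1 (hstretch q.2 hq.1) hq.2]
  ring

theorem contDiffOn_gap_mul_front (hS : IsShockSolution N₁ η τ ζ σ₀ T χ₀ χ₁ N₀ χ N σ) :
    ContDiffOn ℝ 2 (fun t => (N₁ - (ζ * t + τ)) * σ t) (Icc 0 T) :=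
  ContDiffOn.mul (by fun_prop) hS.sigma_smooth

theorem tension_eq (hS : IsShockSolution N₁ η τ ζ σ₀ T χ₀ χ₁ N₀ χ N σ) (hT : 0 < T)
    (hstretch : ∀ t ∈ Icc 0 T, ∀ s, σ t < s → deriv (fun x => χ x t) s = ζ * t + τ)
    (ht : t ∈ Icc 0 T) (hs : σ t ≤ s) : N s t = ζ * t + τ := by
  have hp : (s, t) ∈ Ereg σ T := ⟨ht, hs⟩
  rw [hS.N_eq (s, t) hp]
  exact pder_fst_of_eqOn_add_mul (hS.uniqueDiffOn_Ereg hT) (mapsTo_snd_Ereg σ T)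
    (hS.eqOn_uc hstretch)
    (fun x hx => (hS.contDiffOn_gap_mul_front.differentiableOn two_ne_zero x hx).hasDerivWithinAt)
    (fun x _ => (hasDerivAt_mul_add_const ζ τ x).hasDerivWithinAt) hp

theorem derivWithin_derivWithin_gap_mul_front
    (hS : IsShockSolution N₁ η τ ζ σ₀ T χ₀ χ₁ N₀ χ N σ) (hT : 0 < T)
    (hstretch : ∀ t ∈ Icc 0 T, ∀ s, σ t < s → deriv (fun x => χ x t) s = ζ * t + τ)
    (ht : t ∈ Icc 0 T) :
    derivWithin (derivWithin (fun t => (N₁ - (ζ * t + τ)) * σ t) (Icc 0 T)) (Icc 0 T) t = 0 := by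
  have hu := hS.uniqueDiffOn_Ereg hT
  have hC2 := hS.contDiffOn_gap_mul_front
  have hv := fun x hx => (hC2.differentiableOn two_ne_zero x hx).hasDerivWithinAt
  have hv' := fun x hx => ((hC2.derivWithin (m := 1) (uniqueDiffOn_Icc hT)
    (by norm_num)).differentiableOn one_ne_zero x hx).hasDerivWithinAt
  have hk : ∀ x ∈ Icc 0 T, HasDerivWithinAt (fun t => ζ * t + τ) ζ (Icc 0 T) x :=
    fun x _ => (hasDerivAt_mul_add_const ζ τ x).hasDerivWithinAt
  have hp : (σ t, t) ∈ Ereg σ T := ⟨ht, le_rfl⟩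
  have hwave := hS.wave _ hp
  rw [pder_fst_fst_of_eqOn_add_mul hu (mapsTo_snd_Ereg σ T) (hS.eqOn_uc hstretch) hv hk hp,
    pder_snd_snd_of_eqOn_add_mul (k'' := 0) hu (mapsTo_snd_Ereg σ T) (hS.eqOn_uc hstretch) hv hk
      hv' (fun x _ => hasDerivWithinAt_const x _ _) hp] at hwave
  simpa using hwave

theorem derivWithin_gap_mul_front_zero
    (hS : IsShockSolution N₁ η τ ζ σ₀ T χ₀ χ₁ N₀ χ N σ) (hT : 0 < T)
    (hσ₁ : derivWithin σ (Ici 0) 0 = σ₁) :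
    derivWithin (fun t => (N₁ - (ζ * t + τ)) * σ t) (Icc 0 T) 0 =
      σ₁ * (N₁ - τ) - ζ * σ₀ := by
  have h0 : (0 : ℝ) ∈ Icc 0 T := left_mem_Icc.mpr hT.le
  have hσ' : HasDerivWithinAt σ σ₁ (Icc 0 T) 0 := by
    rw [← hσ₁, ← derivWithin_inter (Iic_mem_nhds hT), Ici_inter_Iic]
    exact (hS.sigma_smooth.differentiableOn two_ne_zero 0 h0).hasDerivWithinAt
  have hgap := ((hasDerivAt_mul_add_const ζ τ 0).const_sub N₁).hasDerivWithinAt (s := Icc 0 T)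
  refine ((hgap.mul hσ').derivWithin (uniqueDiffOn_Icc hT 0 h0)).trans ?_
  rw [hS.sigma_init]
  ring

theorem gap_mul_front_eq (hS : IsShockSolution N₁ η τ ζ σ₀ T χ₀ χ₁ N₀ χ N σ) (hT : 0 < T)
    (hstretch : ∀ t ∈ Icc 0 T, ∀ s, σ t < s → deriv (fun x => χ x t) s = ζ * t + τ)
    (hσ₁ : derivWithin σ (Ici 0) 0 = σ₁) (ht : t ∈ Icc 0 T) :
    (N₁ - (ζ * t + τ)) * σ t = (N₁ - τ) * σ₀ + (σ₁ * (N₁ - τ) - ζ * σ₀) * t := by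
  have haffine := eq_add_mul_sub_of_derivWithin_derivWithin_eq_zero hS.contDiffOn_gap_mul_front
    (fun x hx => hS.derivWithin_derivWithin_gap_mul_front hT hstretch hx) ht
  rw [hS.derivWithin_gap_mul_front_zero hT hσ₁, hS.sigma_init] at haffine
  linear_combination haffine

theorem eq_shockMotion (hS : IsShockSolution N₁ η τ ζ σ₀ T χ₀ χ₁ N₀ χ N σ) (hT : 0 < T)
    (hstretch : ∀ t ∈ Icc 0 T, ∀ s, σ t < s → deriv (fun x => χ x t) s = ζ * t + τ)
    (hσ₁ : derivWithin σ (Ici 0) 0 = σ₁) (ht : t ∈ Icc 0 T) :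
    σ t = shockFront N₁ τ ζ σ₀ σ₁ t ∧ ∀ s, 0 ≤ s →
      χ s t = shockMotion N₁ τ ζ σ₀ σ₁ s t ∧ N s t = shockTension N₁ τ ζ σ₀ σ₁ s t := by
  have hN : ∀ x ∈ Icc 0 T, ζ * x + τ < N₁ := fun x hx =>
    hS.tension_eq hT hstretch hx le_rfl ▸ hS.N_lt (σ x, x) ⟨hx, le_rfl⟩
  have hσ : EqOn σ (shockFront N₁ τ ζ σ₀ σ₁) (Icc 0 T) := fun x hx =>
    mul_left_cancel₀ (sub_pos.mpr (hN x hx)).ne' <|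
      (hS.gap_mul_front_eq hT hstretch hσ₁ hx).trans (gap_mul_shockFront (hN x hx)).symm
  have hσ' : derivWithin σ (Icc 0 T) t = shockSpeed N₁ τ ζ σ₁ t :=
    (derivWithin_congr hσ (hσ ht)).trans (derivWithin_shockFront hT hN ht)
  refine ⟨hσ ht, fun s hs => ⟨?_, ?_⟩⟩
  · rcases le_total s (σ t) with hle | hge
    · rw [hS.inext_chi t ht s ⟨hs, hle⟩, shockMotion_of_le (hσ ht ▸ hle)]
    · rw [shockMotion_of_ge (hN t ht) (hσ ht ▸ hge),
        hS.motion_eq_front_add ht (hstretch t ht) hge]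
      linear_combination hS.gap_mul_front_eq hT hstretch hσ₁ ht
  · rcases lt_or_ge s (σ t) with hlt | hge
    · rw [hS.inext_N t ht s ⟨hs, hlt⟩, hσ', hS.tension_eq hT hstretch ht le_rfl,
        shockTension_of_lt (hσ ht ▸ hlt)]
    · rw [hS.tension_eq hT hstretch ht hge, shockTension_of_ge (hσ ht ▸ hge)]

end IsShockSolution

theorem piecewise_constant_stretched_motions_general
    (N₁ η τ ζ σ₀ σ₁ : ℝ) (hτN : τ < N₁) :
    (∀ T, 0 < T →
      (∀ t ∈ Icc 0 T, η < ζ * t + τ ∧ ζ * t + τ < N₁ ∧ 1 < shockSpeed N₁ τ ζ σ₁ t) →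
      IsShockSolution N₁ η τ ζ σ₀ T (fun s => shockMotion N₁ τ ζ σ₀ σ₁ s 0)
        (shockInitialVelocity N₁ τ ζ σ₀ σ₁) (fun s => shockTension N₁ τ ζ σ₀ σ₁ s 0)
        (shockMotion N₁ τ ζ σ₀ σ₁) (shockTension N₁ τ ζ σ₀ σ₁) (shockFront N₁ τ ζ σ₀ σ₁)) ∧
    shockFront N₁ τ ζ σ₀ σ₁ 0 = σ₀ ∧ deriv (shockFront N₁ τ ζ σ₀ σ₁) 0 = σ₁ ∧
    (∀ t, ζ * t + τ < N₁ → deriv (shockFront N₁ τ ζ σ₀ σ₁) t = shockSpeed N₁ τ ζ σ₁ t) ∧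
    (∀ t, ζ * t + τ < N₁ → ∀ s, (s < shockFront N₁ τ ζ σ₀ σ₁ t →
        deriv (fun x => shockMotion N₁ τ ζ σ₀ σ₁ x t) s = N₁) ∧
      (shockFront N₁ τ ζ σ₀ σ₁ t < s →
        deriv (fun x => shockMotion N₁ τ ζ σ₀ σ₁ x t) s = ζ * t + τ)) ∧
    (∀ (χ₀ χ₁ N₀ : ℝ → ℝ) (χ N : ℝ → ℝ → ℝ) (σ : ℝ → ℝ) (T : ℝ), 0 < T →
      IsShockSolution N₁ η τ ζ σ₀ T χ₀ χ₁ N₀ χ N σ →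
      (∀ t ∈ Icc 0 T, ∀ s, σ t < s → deriv (fun x => χ x t) s = ζ * t + τ) →
      derivWithin σ (Ici 0) 0 = σ₁ →
      ∀ t ∈ Icc 0 T, σ t = shockFront N₁ τ ζ σ₀ σ₁ t ∧ ∀ s, 0 ≤ s →
        χ s t = shockMotion N₁ τ ζ σ₀ σ₁ s t ∧ N s t = shockTension N₁ τ ζ σ₀ σ₁ s t) := by
  refine ⟨fun T hT hadm => isShockSolution_shockMotion hT (fun t ht => (hadm t ht).1)
      (fun t ht => (hadm t ht).2.1) fun t ht => (hadm t ht).2.2,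
    shockFront_zero, ?_, fun t ht => (hasDerivAt_shockFront ht).deriv,
    fun t _ s => ⟨deriv_shockMotion_of_lt, deriv_shockMotion_of_gt⟩,
    fun χ₀ χ₁ N₀ χ N σ T hT hS hstretch hσ₁ t ht => hS.eq_shockMotion hT hstretch hσ₁ ht⟩
  rw [(hasDerivAt_shockFront (by simpa using hτN)).deriv, shockSpeed_zero hτN]

/-- Proposition 4.1: the explicit two-parameter family of piece-wise constant stretched
motions.  With `σ(t) = σ₀ + σ₁(N₁-τ)t/(N₁-(ζt+τ))`, `χ` and `N` defined piecewise as in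
(4.4), the pair `(χ, N)` is a classical shock solution on `[0,T]` for every
`0 < T < T(ζ)` (where `t < T(ζ)` iff `ζ t < N₁ - τ`), has `σ(0) = σ₀`,
`σ'(0) = σ₁`, shock speed `σ'(t) = σ₁(N₁-τ)²/(N₁-(ζt+τ))² ≥ σ₁ > 1`, piece-wise
constant stretch, and is the unique classical shock solution on `[0,T(ζ))` with
piece-wise constant stretch of this form satisfying `σ(0) = σ₀` and `σ'(0) = σ₁`. -/
theorem piecewise_constant_stretched_motions
    (N₁ η τ ζ σ₀ σ₁ : ℝ)
    (hN₁ : 0 < N₁) (hη : 0 < η) (hηN : η < N₁) (hτη : η < τ) (hτN : τ < N₁) (hζ : 0 ≤ ζ)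
    (hσ₀ : 0 < σ₀) (hσ₁ : 1 < σ₁)
    (σ : ℝ → ℝ) (hσdef : σ = fun t => σ₀ + σ₁ * (N₁ - τ) * t / (N₁ - (ζ * t + τ)))
    (χ : ℝ → ℝ → ℝ)
    (hχdef : χ = fun s t => if s ≤ σ t then N₁ * s
      else N₁ * σ₀ + (ζ * t + τ) * (s - σ₀) + σ₁ * (N₁ - τ) * t)
    (N : ℝ → ℝ → ℝ)
    (hNdef : N = fun s t => if s < σ t then
        (ζ * t + τ) + (σ₁ * (N₁ - τ) ^ 2 / (N₁ - (ζ * t + τ)) ^ 2) ^ 2 * (N₁ - (ζ * t + τ))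
      else ζ * t + τ) :
    (∀ T, 0 < T → ζ * T < N₁ - τ →
      IsShockSolution N₁ η τ ζ σ₀ T (fun s => χ s 0)
        (fun s => if s < σ₀ then 0 else ζ * (s - σ₀) + σ₁ * (N₁ - τ))
        (fun s => N s 0) χ N σ) ∧
    σ 0 = σ₀ ∧ deriv σ 0 = σ₁ ∧
    (∀ t, 0 ≤ t → ζ * t < N₁ - τ →
      deriv σ t = σ₁ * (N₁ - τ) ^ 2 / (N₁ - (ζ * t + τ)) ^ 2 ∧ σ₁ ≤ deriv σ t) ∧
    (∀ t, 0 ≤ t → ζ * t < N₁ - τ → ∀ s : ℝ,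
      (0 ≤ s → s < σ t → deriv (fun x => χ x t) s = N₁) ∧
      (σ t < s → deriv (fun x => χ x t) s = ζ * t + τ)) ∧
    (∀ χc Nc : ℝ → ℝ → ℝ, ∀ σc : ℝ → ℝ, ∀ χ₁c : ℝ → ℝ,
      (∀ T, 0 < T → ζ * T < N₁ - τ →
        IsShockSolution N₁ η τ ζ σ₀ T (fun s => χc s 0) χ₁c (fun s => Nc s 0) χc Nc σc) →
      (∀ t, 0 ≤ t → ζ * t < N₁ - τ → ∀ s : ℝ,
        (0 ≤ s → s < σc t → deriv (fun x => χc x t) s = N₁) ∧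
        (σc t < s → deriv (fun x => χc x t) s = ζ * t + τ)) →
      σc 0 = σ₀ → derivWithin σc (Ici 0) 0 = σ₁ →
      ∀ t, 0 ≤ t → ζ * t < N₁ - τ →
        σc t = σ t ∧ ∀ s, 0 ≤ s → χc s t = χ s t ∧ Nc s t = N s t) := by
  subst hσdef hχdef hNdef
  obtain ⟨hsol, hfront₀, hspeed₀, hspeed, hstretch, huniq⟩ :=
    piecewise_constant_stretched_motions_general N₁ η τ ζ σ₀ σ₁ hτN
  have hlt : ∀ {t}, ζ * t < N₁ - τ → ζ * t + τ < N₁ := lt_sub_iff_add_lt.mp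
  have hσ₁_le := fun t ht₀ ht => le_shockSpeed (t := t) hζ (by linarith : 0 ≤ σ₁) ht₀ (hlt ht)
  refine ⟨fun T hT hTT => hsol T hT fun t ht => ?_, hfront₀, hspeed₀,
    fun t ht₀ ht => ⟨hspeed t (hlt ht), (hσ₁_le t ht₀ ht).trans_eq (hspeed t (hlt ht)).symm⟩,
    fun t _ ht s => ⟨fun _ => (hstretch t (hlt ht) s).1, (hstretch t (hlt ht) s).2⟩,
    fun χc Nc σc χ₁c hS hP _ hσ₁c t ht₀ ht => ?_⟩
  · have htT : ζ * t < N₁ - τ := (mul_le_mul_of_nonneg_left ht.2 hζ).trans_lt hTT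
    exact ⟨hτη.trans_le (le_add_of_nonneg_left (mul_nonneg hζ ht.1)), hlt htT,
      hσ₁.trans_le (hσ₁_le t ht.1 htT)⟩
  · obtain ⟨T, htT, hTT⟩ :=
      (((continuous_const_mul ζ).tendsto t).eventually_lt_const ht).exists_gt
    have hT : 0 < T := ht₀.trans_lt htT
    exact huniq _ _ _ χc Nc σc T hT (hS T hT hTT) (fun x hx y => (hP x hx.1
      ((mul_le_mul_of_nonneg_left hx.2 hζ).trans_lt hTT) y).2) hσ₁c t ⟨ht₀, htT.le⟩
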